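/- arXiv:2507.11672 — 2 statements merged into one kernel-verified Lean document; each statement's English description precedes it below -/
import Mathlib

section
/- Let M = p^{n_1} q^{n_2} with p, q distinct primes, and let A : ℤ_M → ℕ be a multiset with positive total mass. Suppose that Φ_{p^{m_1}}(X) ⋯ Φ_{p^{m_r}}(X) · Φ_{p^α q^β}(X) · Φ_{q^γ}(X) divides A(X), where 1 ≤ m_1 < ⋯ < m_r < α ≤ n_1 and 1 ≤ γ < β ≤ n_2. Then |A| ≥ p^r · q · min(p, q). -/
open Polynomial

/-- Mask polynomial of a multiset (weight function) on `ZMod M`: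
`A(X) = ∑_{x ∈ ℤ_M} w(x) · X^{x.val}`. -/
noncomputable def wmaskPoly (M : ℕ) (w : ZMod M → ℕ) : Polynomial ℤ :=
  ∑ i ∈ Finset.range M, C ((w (i : ZMod M)) : ℤ) * X ^ i

/-- Total mass `∑_x w(x)` of a multiset on `ZMod M`. -/
def wmass (M : ℕ) (w : ZMod M → ℕ) : ℕ :=
  ∑ i ∈ Finset.range M, w (i : ZMod M)

/-!
Write `N = p ^ α * q ^ β`. Since `X ^ N - 1` divides
`(X ^ (N / p) - 1) * (X ^ (N / q) - 1) * Φ_N`, divisibility of `A` by `Φ_N` makes `A` congruent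
modulo `X ^ N - 1` to `Φ_p(X ^ (N / p)) * F + Φ_q(X ^ (N / q)) * G`, where `F` and `G` can be
chosen with nonnegative coefficients (the fiber decomposition of de Bruijn and Lam–Leung). For
`m < α` this reduces to `p * F + q * G` modulo `X ^ (p ^ m) - 1`.

Divisibility by `Φ_{p ^ m}` says that the coefficient sums over residue classes modulo `p ^ m`
depend only on the class modulo `p ^ (m - 1)`. If `A(1) < p ^ r * q * min p q`, these sums are, up
to a power of `p`, so small that they determine `u` and `v` in a representation `p * u + q * v`.
Hence the divisibility passes from `p * F + q * G` to `F`, and `p ^ r ∣ F(1)`; also `q ∣ F(1)`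
because `Φ_{q ^ γ}` gives `q ∣ A(1)`. Either `F(1) > 0`, and then
`A(1) ≥ p * F(1) ≥ p ^ r * p * q`; or `F = 0`, and then `Φ_{q ^ β}` divides `A` along with
`Φ_{q ^ γ}`, so `p ^ r * q ^ 2 ∣ A(1)`.
-/

section ResidueSum

variable {R : Type*} [CommRing R]

/-- The sum of the coefficients of `P` at exponents congruent to `x` modulo `d`. Residues are
represented by integers rather than by elements of `ZMod d`, so that the sums for different moduli
can be compared at the same argument. -/
noncomputable def residueSum (d : ℕ) : R[X] →ₗ[R] ℤ → R :=
  lsum fun n => LinearMap.pi fun x => if (d : ℤ) ∣ x - n then LinearMap.id else 0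

lemma residueSum_eq_sum (d : ℕ) (P : R[X]) (x : ℤ) :
    residueSum d P x = ∑ n ∈ P.support, if (d : ℤ) ∣ x - n then P.coeff n else 0 := by
  simp only [residueSum, lsum, LinearMap.coe_mk, AddHom.coe_mk, sum_def, Finset.sum_apply,
    LinearMap.pi_apply]
  refine Finset.sum_congr rfl fun n _ => ?_
  split_ifs <;> rfl

lemma residueSum_monomial (d n : ℕ) (a : R) (x : ℤ) :
    residueSum d (monomial n a) x = if (d : ℤ) ∣ x - n then a else 0 := by
  rw [residueSum_eq_sum, Finset.sum_subset (support_monomial_subset n a)]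
  · simp
  · intro m _ hm
    simp [notMem_support_iff.1 hm]

lemma residueSum_one (P : R[X]) (x : ℤ) : residueSum 1 P x = P.eval 1 := by
  simp [residueSum_eq_sum, eval_eq_sum, sum_def]

lemma residueSum_X_pow_mul (d k : ℕ) (P : R[X]) (x : ℤ) :
    residueSum d (X ^ k * P) x = residueSum d P (x - k) := by
  induction P using Polynomial.induction_on' with
  | add P Q hP hQ => simp only [mul_add, map_add, Pi.add_apply, hP, hQ]
  | monomial n a =>
    rw [X_pow_mul_monomial, residueSum_monomial, residueSum_monomial, Nat.cast_add, add_comm,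
      sub_add_eq_sub_sub]

lemma residueSum_X_pow_sub_one_mul (d c : ℕ) (P : R[X]) (x : ℤ) :
    residueSum d ((X ^ c - 1) * P) x = residueSum d P (x - c) - residueSum d P x := by
  rw [sub_mul, one_mul, map_sub, Pi.sub_apply, residueSum_X_pow_mul]

lemma residueSum_periodic (d : ℕ) (P : R[X]) : Function.Periodic (residueSum d P) d := by
  intro x
  simp only [residueSum_eq_sum, add_sub_right_comm, dvd_add_self_right]

lemma residueSum_eq_coeff {d : ℕ} {P : R[X]} (hP : P.degree < d) {n : ℕ} (hn : n < d) :
    residueSum d P n = P.coeff n := by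
  have hdvd (m : ℕ) (hm : m ∈ P.support) : (d : ℤ) ∣ n - m ↔ m = n := by
    have hmd : m < d := by exact_mod_cast (le_degree_of_mem_supp m hm).trans_lt hP
    rw [← Nat.modEq_iff_dvd, Nat.ModEq, Nat.mod_eq_of_lt hmd, Nat.mod_eq_of_lt hn]
  rw [residueSum_eq_sum, Finset.sum_congr rfl fun m hm => if_congr (hdvd m hm) rfl rfl,
    Finset.sum_ite_eq', ite_eq_left_iff, notMem_support_iff]
  exact Eq.symm

lemma exists_residueSum_eq {d : ℕ} (hd : 0 < d) {h : ℤ → R} (hper : Function.Periodic h d) :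
    ∃ P : R[X], residueSum d P = h ∧ ∀ n, P.coeff n = 0 ∨ P.coeff n = h n := by
  let P : R[X] := ∑ n ∈ Finset.range d, monomial n (h n)
  have hcoeff (n : ℕ) : P.coeff n = if n < d then h n else 0 := by
    simp [P, finsetSum_coeff, coeff_monomial]
  have hdeg : P.degree < d := (degree_lt_iff_coeff_zero _ _).2 fun n hn => by
    rw [hcoeff, if_neg hn.not_gt]
  refine ⟨P, funext fun x => ?_, fun n => ?_⟩
  · obtain ⟨m, hm⟩ := Int.eq_ofNat_of_zero_le (Int.emod_nonneg x (Int.natCast_pos.2 hd).ne')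
    have hmd : m < d := by have := Int.emod_lt_of_pos x (Int.natCast_pos.2 hd); omega
    have hx : x = m + (x / d) • (d : ℤ) := by
      rw [← hm, smul_eq_mul, mul_comm, Int.emod_add_mul_ediv]
    rw [hx, (residueSum_periodic d P).zsmul, hper.zsmul, residueSum_eq_coeff hdeg hmd, hcoeff,
      if_pos hmd]
  · rw [hcoeff]
    split_ifs <;> simp

theorem X_pow_sub_one_dvd_iff_residueSum_eq_zero {d : ℕ} (hd : 0 < d) {P : R[X]} :
    X ^ d - 1 ∣ P ↔ residueSum d P = 0 := by
  have hmul (Q : R[X]) : residueSum d ((X ^ d - 1) * Q) = 0 := funext fun x => by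
    rw [residueSum_X_pow_sub_one_mul, (residueSum_periodic d Q).sub_eq, sub_self, Pi.zero_apply]
  refine ⟨fun ⟨Q, hQ⟩ => hQ ▸ hmul Q, fun hP => ?_⟩
  nontriviality R
  have hmonic : (X ^ d - 1 : R[X]).Monic := by simpa using monic_X_pow_sub_C (1 : R) hd.ne'
  have hdeg : (P %ₘ (X ^ d - 1)).degree < d := by
    rw [← degree_X_pow_sub_C hd (1 : R), C_1]
    exact degree_modByMonic_lt P hmonic
  have hmod : residueSum d (P %ₘ (X ^ d - 1)) = 0 := by
    rw [← hP, ← add_zero (residueSum d _), ← hmul (P /ₘ (X ^ d - 1)), ← map_add,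
      modByMonic_add_div]
  rw [← modByMonic_eq_zero_iff_dvd hmonic]
  ext n
  rcases lt_or_ge n d with hn | hn
  · rw [← residueSum_eq_coeff hdeg hn, hmod, Pi.zero_apply, coeff_zero]
  · rw [coeff_eq_zero_of_degree_lt (hdeg.trans_le (by exact_mod_cast hn)), coeff_zero]

lemma X_pow_sub_one_dvd_mul_iff_periodic {c d : ℕ} (hd : 0 < d) {P : R[X]} :
    X ^ d - 1 ∣ (X ^ c - 1) * P ↔ Function.Periodic (residueSum d P) c := by
  rw [X_pow_sub_one_dvd_iff_residueSum_eq_zero hd, funext_iff]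
  simp only [residueSum_X_pow_sub_one_mul, Pi.zero_apply, sub_eq_zero]
  exact ⟨fun h x => by simpa using (h (x + c)).symm, fun h x => h.sub_eq x⟩

lemma X_pow_sub_one_dvd_X_pow_sub_one {c d : ℕ} (h : d ∣ c) : (X ^ d - 1 : R[X]) ∣ X ^ c - 1 := by
  obtain ⟨e, rfl⟩ := h
  exact pow_one_sub_dvd_pow_mul_sub_one X d e

lemma X_pow_sub_one_dvd_geom_sum_sub {c d : ℕ} (h : d ∣ c) (k : ℕ) :
    (X ^ d - 1 : R[X]) ∣ ∑ i ∈ Finset.range k, (X ^ c) ^ i - (k : R[X]) := by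
  have hk : (k : R[X]) = ∑ i ∈ Finset.range k, 1 := by simp
  rw [hk, ← Finset.sum_sub_distrib]
  exact Finset.dvd_sum fun i _ => by
    rw [← pow_mul]
    exact X_pow_sub_one_dvd_X_pow_sub_one (h.mul_right i)

lemma residueSum_geom_sum_mul {c d : ℕ} (hd : 0 < d) (h : d ∣ c) (k : ℕ) (P : R[X]) :
    residueSum d ((∑ i ∈ Finset.range k, (X ^ c) ^ i) * P) = k • residueSum d P := by
  have := (X_pow_sub_one_dvd_iff_residueSum_eq_zero hd).1
    ((X_pow_sub_one_dvd_geom_sum_sub (R := R) h k).mul_right P)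
  rw [sub_mul, map_sub, sub_eq_zero] at this
  rw [this, ← nsmul_eq_mul, map_nsmul]

lemma residueSum_mul_geom_sum_mul {d k : ℕ} (hd : 0 < d) (hk : 0 < k) (P : R[X]) :
    residueSum (d * k) ((∑ i ∈ Finset.range k, (X ^ d) ^ i) * P) = residueSum d P := by
  have hd' : (d : ℤ) ≠ 0 := by exact_mod_cast hd.ne'
  have hk' : (0 : ℤ) < k := by exact_mod_cast hk
  funext x
  simp only [Finset.sum_mul, map_sum, Finset.sum_apply, ← pow_mul, residueSum_X_pow_mul]
  induction P using Polynomial.induction_on' with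
  | add P Q hP hQ => simp only [map_add, Pi.add_apply, Finset.sum_add_distrib, hP, hQ]
  | monomial n a =>
    simp only [residueSum_monomial, Nat.cast_mul]
    by_cases hx : (d : ℤ) ∣ x - n
    · obtain ⟨t, ht⟩ := hx
      have hdvd (i : ℕ) (hi : i ∈ Finset.range k) :
          (d * k : ℤ) ∣ x - d * i - n ↔ i = (t % k).toNat := by
        have hik := Finset.mem_range.1 hi
        have := Int.emod_nonneg t hk'.ne'
        rw [show x - d * i - n = d * (t - i) by rw [mul_sub, ← ht]; ring,
          mul_dvd_mul_iff_left hd', ← Int.modEq_iff_dvd, Int.ModEq,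
          Int.emod_eq_of_lt (by positivity) (by exact_mod_cast hik)]
        omega
      have hmem : (t % k).toNat ∈ Finset.range k := by
        have := Int.emod_lt_of_pos t hk'
        rw [Finset.mem_range]
        omega
      rw [Finset.sum_congr rfl fun i hi => if_congr (hdvd i hi) rfl rfl, Finset.sum_ite_eq',
        if_pos hmem, if_pos ⟨t, ht⟩]
    · rw [if_neg hx]
      refine Finset.sum_eq_zero fun i _ => if_neg fun h => hx ?_
      rw [show x - n = (x - d * i - n) + d * i by ring]
      exact dvd_add ((dvd_mul_right _ _).trans h) (dvd_mul_right _ _)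

end ResidueSum

section Nonneg

variable {R : Type*} [CommRing R] [PartialOrder R] [IsOrderedRing R] {P : R[X]}

lemma residueSum_nonneg (hP : ∀ n, 0 ≤ P.coeff n) (d : ℕ) (x : ℤ) : 0 ≤ residueSum d P x := by
  rw [residueSum_eq_sum]
  exact Finset.sum_nonneg fun n _ => ite_nonneg (hP n) le_rfl

lemma residueSum_le_of_dvd (hP : ∀ n, 0 ≤ P.coeff n) {d e : ℕ} (h : d ∣ e) (x : ℤ) :
    residueSum e P x ≤ residueSum d P x := by
  simp only [residueSum_eq_sum]
  refine Finset.sum_le_sum fun n _ => ?_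
  by_cases he : (e : ℤ) ∣ x - n
  · rw [if_pos he, if_pos ((Int.natCast_dvd_natCast.2 h).trans he)]
  · rw [if_neg he]
    exact ite_nonneg (hP n) le_rfl

lemma eval_one_nonneg (hP : ∀ n, 0 ≤ P.coeff n) : 0 ≤ P.eval 1 :=
  residueSum_one P 0 ▸ residueSum_nonneg hP 1 0

lemma eq_zero_of_eval_one_eq_zero (hP : ∀ n, 0 ≤ P.coeff n) (h : P.eval 1 = 0) : P = 0 := by
  simp only [eval_eq_sum, sum_def, one_pow, mul_one] at h
  ext n
  by_contra hn
  exact hn ((Finset.sum_eq_zero_iff_of_nonneg fun n _ => hP n).1 h n (mem_support_iff.2 hn))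

end Nonneg

lemma X_pow_sub_one_dvd_mul_mul_cyclotomic (R : Type*) [CommRing R] {c d N : ℕ} (hc : c ∣ N)
    (hd : 0 < d) (hdN : d < N) (h : ∀ e, e ∣ N → e ∣ c ∨ e ∣ d ∨ e = N) :
    (X ^ N - 1 : R[X]) ∣ (X ^ c - 1) * ((X ^ d - 1) * cyclotomic N R) := by
  have hN : N ∉ d.divisors := fun hN => hdN.not_ge (Nat.divisor_le hN)
  have hsub : N.divisors \ c.divisors ⊆ insert N d.divisors := fun e he => by
    simp only [Finset.mem_sdiff, Finset.mem_insert, Nat.mem_divisors] at he ⊢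
    have hec : ¬ e ∣ c := fun hec => he.2 ⟨hec, ne_zero_of_dvd_ne_zero he.1.2 hc⟩
    exact ((h e he.1.1).resolve_left hec).symm.imp_right fun hed => ⟨hed, hd.ne'⟩
  rw [← X_pow_sub_one_mul_prod_cyclotomic_eq_X_pow_sub_one_of_dvd R hc (hd.trans hdN).ne',
    ← prod_cyclotomic_eq_X_pow_sub_one hd R, mul_comm (∏ e ∈ d.divisors, _),
    ← Finset.prod_insert (f := (cyclotomic · R)) hN]
  exact mul_dvd_mul_left _ (Finset.prod_dvd_prod_of_subset _ _ _ hsub)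

lemma cyclotomic_dvd_geom_sum {c k s : ℕ} (hck : c * k ≠ 0) (hs : s ∣ c * k) (hsc : ¬ s ∣ c) :
    cyclotomic s ℤ ∣ ∑ i ∈ Finset.range k, (X ^ c) ^ i := by
  have hc : 0 < c := Nat.pos_of_ne_zero (left_ne_zero_of_mul hck)
  have hne : (X ^ c - 1 : ℤ[X]) ≠ 0 := by simpa using X_pow_sub_C_ne_zero hc (1 : ℤ)
  have hmem : s ∈ (c * k).divisors \ c.divisors := by simp [hs, hsc, hck]
  have hprod : ∏ e ∈ (c * k).divisors \ c.divisors, cyclotomic e ℤ =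
      ∑ i ∈ Finset.range k, (X ^ c) ^ i := mul_left_cancel₀ hne <| by
    rw [X_pow_sub_one_mul_prod_cyclotomic_eq_X_pow_sub_one_of_dvd ℤ (dvd_mul_right c k) hck,
      mul_geom_sum, pow_mul]
  exact hprod ▸ Finset.dvd_prod_of_mem (cyclotomic · ℤ) hmem

lemma prod_cyclotomic_dvd {ι : Type*} {s : Finset ι} {f : ι → ℕ} (hf : Set.InjOn f s) {P : ℤ[X]}
    (h : ∀ i ∈ s, cyclotomic (f i) ℤ ∣ P) : ∏ i ∈ s, cyclotomic (f i) ℤ ∣ P := by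
  rw [← map_dvd_map (Int.castRingHom ℚ) Int.cast_injective
    (monic_prod_of_monic _ _ fun i _ => cyclotomic.monic (f i) ℤ), Polynomial.map_prod]
  refine Finset.prod_dvd_of_coprime (fun i hi j hj hij => ?_) fun i hi =>
    Polynomial.map_dvd (Int.castRingHom ℚ) (h i hi)
  simpa only [Function.onFun, map_cyclotomic_int] using
    cyclotomic.isCoprime_rat fun hfij => hij (hf hi hj hfij)

section PrimePower

variable {p : ℕ} (hp : p.Prime)
include hp

lemma cyclotomic_prime_pow_dvd_iff_periodic {n : ℕ} {P : ℤ[X]} :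
    cyclotomic (p ^ (n + 1)) ℤ ∣ P ↔
      Function.Periodic (residueSum (p ^ (n + 1)) P) (p ^ n : ℕ) := by
  have := Fact.mk hp
  have hne : (X ^ p ^ n - 1 : ℤ[X]) ≠ 0 := by
    simpa using X_pow_sub_C_ne_zero (pow_pos hp.pos n) (1 : ℤ)
  rw [← X_pow_sub_one_dvd_mul_iff_periodic (pow_pos hp.pos _),
    ← cyclotomic_prime_pow_mul_X_pow_sub_one, mul_comm, mul_dvd_mul_iff_left hne]

lemma mul_residueSum_prime_pow_succ {n : ℕ} {P : ℤ[X]} (h : cyclotomic (p ^ (n + 1)) ℤ ∣ P)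
    (x : ℤ) : p * residueSum (p ^ (n + 1)) P x = residueSum (p ^ n) P x := by
  obtain ⟨Q, rfl⟩ := h
  have hpn : 0 < p ^ n := pow_pos hp.pos n
  rw [cyclotomic_prime_pow_eq_geom_sum hp, residueSum_geom_sum_mul hpn dvd_rfl, pow_succ,
    residueSum_mul_geom_sum_mul hpn hp.pos, Pi.smul_apply, nsmul_eq_mul]

lemma pow_card_dvd_residueSum {n : ℕ} {V : Finset ℕ} (hV : ∀ m ∈ V, n < m) {P : ℤ[X]}
    (h : ∀ m ∈ V, cyclotomic (p ^ m) ℤ ∣ P) (x : ℤ) :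
    (p : ℤ) ^ V.card ∣ residueSum (p ^ n) P x := by
  obtain ⟨Q, rfl⟩ := prod_cyclotomic_dvd (Nat.pow_right_injective hp.two_le).injOn h
  suffices residueSum (p ^ n) ((∏ m ∈ V, cyclotomic (p ^ m) ℤ) * Q) =
      (p ^ V.card) • residueSum (p ^ n) Q by simp [this]
  clear h
  induction V using Finset.induction_on with
  | empty => simp
  | insert m V hm ih =>
    obtain ⟨l, rfl⟩ : ∃ l, m = l + 1 := Nat.exists_eq_add_one.2
      (Nat.zero_lt_of_lt (hV m (Finset.mem_insert_self m V)))
    have hnl : n ≤ l := Nat.lt_succ_iff.1 (hV _ (Finset.mem_insert_self _ V))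
    rw [Finset.prod_insert hm, Finset.card_insert_of_notMem hm, mul_assoc,
      cyclotomic_prime_pow_eq_geom_sum hp,
      residueSum_geom_sum_mul (pow_pos hp.pos n) (pow_dvd_pow p hnl),
      ih fun m hm => hV m (Finset.mem_insert_of_mem hm), smul_smul, pow_succ']

lemma exists_nonneg_residueSum_eq {n : ℕ} {P : ℤ[X]} (hP : ∀ n, 0 ≤ P.coeff n) {V : Finset ℕ}
    (hV : ∀ m ∈ V, n < m) (h : ∀ m ∈ V, cyclotomic (p ^ m) ℤ ∣ P) :
    ∃ u : ℤ → ℤ, (∀ x, 0 ≤ u x) ∧ ∀ x, residueSum (p ^ n) P x = p ^ V.card * u x := by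
  choose u hu using pow_card_dvd_residueSum hp hV h
  have hpos : (0 : ℤ) < p ^ V.card := pow_pos (by exact_mod_cast hp.pos) _
  exact ⟨u, fun x => nonneg_of_mul_nonneg_right (hu x ▸ residueSum_nonneg hP _ x) hpos, hu⟩

lemma pow_card_dvd_eval_one {V : Finset ℕ} (hV : ∀ m ∈ V, 0 < m) {P : ℤ[X]}
    (h : ∀ m ∈ V, cyclotomic (p ^ m) ℤ ∣ P) : (p : ℤ) ^ V.card ∣ P.eval 1 := by
  simpa [residueSum_one] using pow_card_dvd_residueSum hp hV h 0

lemma pow_card_mul_residueSum_le {U : Finset ℕ} (hU : ∀ m ∈ U, 0 < m) {P : ℤ[X]}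
    (hP : ∀ n, 0 ≤ P.coeff n) (h : ∀ m ∈ U, cyclotomic (p ^ m) ℤ ∣ P) (n : ℕ) (x : ℤ) :
    (p : ℤ) ^ (U.filter (· ≤ n)).card * residueSum (p ^ n) P x ≤ P.eval 1 := by
  induction n with
  | zero =>
    have : U.filter (· ≤ 0) = ∅ := Finset.filter_eq_empty_iff.2 fun m hm => (hU m hm).not_ge
    rw [this, Finset.card_empty, pow_zero, one_mul, pow_zero, residueSum_one]
  | succ n ih =>
    by_cases hn : n + 1 ∈ U
    · have hins : U.filter (· ≤ n + 1) = insert (n + 1) (U.filter (· ≤ n)) := by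
        ext m
        simp only [Finset.mem_filter, Finset.mem_insert]
        grind
      rw [hins, Finset.card_insert_of_notMem (by simp), pow_succ, mul_assoc,
        mul_residueSum_prime_pow_succ hp (h _ hn)]
      exact ih
    · have heq : U.filter (· ≤ n + 1) = U.filter (· ≤ n) := by
        ext m
        simp only [Finset.mem_filter]
        grind
      rw [heq]
      refine le_trans ?_ ih
      gcongr
      exact residueSum_le_of_dvd hP (pow_dvd_pow p n.le_succ) x

lemma pow_card_mul_pow_card_dvd_eval_one {q : ℕ} (hq : q.Prime) (hpq : p ≠ q) {U V : Finset ℕ}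
    (hU : ∀ m ∈ U, 0 < m) (hV : ∀ m ∈ V, 0 < m) {P : ℤ[X]}
    (hp_dvd : ∀ m ∈ U, cyclotomic (p ^ m) ℤ ∣ P) (hq_dvd : ∀ m ∈ V, cyclotomic (q ^ m) ℤ ∣ P) :
    (p : ℤ) ^ U.card * q ^ V.card ∣ P.eval 1 :=
  (Nat.isCoprime_iff_coprime.2 ((Nat.coprime_primes hp hq).2 hpq)).pow.mul_dvd
    (pow_card_dvd_eval_one hp hU hp_dvd) (pow_card_dvd_eval_one hq hV hq_dvd)

end PrimePower

section FiberDecomposition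

/-- The largest `c`-periodic minorant of `W` takes up the whole variation of `W` along `d`. -/
lemma exists_periodic_add_periodic {G : Type*} [AddCommGroup G] {W : G → ℤ} (hW : ∀ x, 0 ≤ W x)
    {c d : G} (h : Function.Periodic (fun x => W (x + d) - W x) c) :
    ∃ f g : G → ℤ, (∀ x, 0 ≤ f x) ∧ (∀ x, 0 ≤ g x) ∧ Function.Periodic f c ∧
      Function.Periodic g d ∧ W = f + g := by
  let f : G → ℤ := fun x => ⨅ j : ℤ, W (x + j • c)
  have hbdd (x : G) : BddBelow (Set.range fun j : ℤ => W (x + j • c)) :=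
    ⟨0, Set.forall_mem_range.2 fun _ => hW _⟩
  have hfW (x : G) : f x ≤ W x := by simpa using ciInf_le (hbdd x) 0
  have hfc : Function.Periodic f c := fun x =>
    (Equiv.addRight (1 : ℤ)).iInf_congr fun j => by
      simp only [Equiv.coe_addRight, add_smul, one_smul, add_assoc, add_comm c]
  have hfd (x : G) : f (x + d) = f x + (W (x + d) - W x) := by
    rw [ciInf_add (hbdd x)]
    refine iInf_congr fun j => ?_
    have := h.zsmul j x
    simp only [add_right_comm x] at this ⊢
    omega
  refine ⟨f, W - f, fun x => le_ciInf fun j => hW _, fun x => sub_nonneg.2 (hfW x), hfc,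
    fun x => ?_, (add_sub_cancel f W).symm⟩
  simp only [Pi.sub_apply, hfd]
  omega

theorem exists_fiber_decomposition {c d k l : ℕ} (hc : 0 < c) (hk : 0 < k) (hd : 0 < d)
    (hl : 0 < l) (hckdl : c * k = d * l) {A : ℤ[X]} (hA : ∀ n, 0 ≤ A.coeff n)
    (h : X ^ (c * k) - 1 ∣ (X ^ c - 1) * ((X ^ d - 1) * A)) :
    ∃ F G : ℤ[X], (∀ n, 0 ≤ F.coeff n) ∧ (∀ n, 0 ≤ G.coeff n) ∧
      X ^ (c * k) - 1 ∣ A - ((∑ i ∈ Finset.range k, (X ^ c) ^ i) * F +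
        (∑ i ∈ Finset.range l, (X ^ d) ^ i) * G) := by
  have hN : 0 < c * k := Nat.mul_pos hc hk
  have hper : Function.Periodic
      (fun x => residueSum (c * k) A (x + -d) - residueSum (c * k) A x) c := by
    simpa only [← sub_eq_add_neg, ← residueSum_X_pow_sub_one_mul] using
      (X_pow_sub_one_dvd_mul_iff_periodic hN).1 h
  obtain ⟨f, g, hf, hg, hfc, hgd, hfg⟩ :=
    exists_periodic_add_periodic (residueSum_nonneg hA (c * k)) hper
  obtain ⟨F, hF, hFcoeff⟩ := exists_residueSum_eq hc hfc
  obtain ⟨G, hG, hGcoeff⟩ := exists_residueSum_eq hd (neg_neg (d : ℤ) ▸ hgd.neg)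
  refine ⟨F, G, fun n => ?_, fun n => ?_, ?_⟩
  · rcases hFcoeff n with h0 | h0 <;> simp [h0, hf]
  · rcases hGcoeff n with h0 | h0 <;> simp [h0, hg]
  · rw [X_pow_sub_one_dvd_iff_residueSum_eq_zero hN, map_sub, map_add,
      residueSum_mul_geom_sum_mul hc hk, hckdl, residueSum_mul_geom_sum_mul hd hl, hF, hG,
      ← hckdl, hfg, sub_self]

end FiberDecomposition

lemma dvd_or_dvd_or_eq_of_dvd_prime_pow_mul {p q : ℕ} (hp : p.Prime) (hq : q.Prime) {a b e : ℕ}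
    (h : e ∣ p ^ (a + 1) * q ^ (b + 1)) :
    e ∣ p ^ a * q ^ (b + 1) ∨ e ∣ p ^ (a + 1) * q ^ b ∨ e = p ^ (a + 1) * q ^ (b + 1) := by
  obtain ⟨_, _, hi, hj, rfl⟩ := (Nat.dvd_mul.1 h)
  obtain ⟨i, hia, rfl⟩ := (Nat.dvd_prime_pow hp).1 hi
  obtain ⟨j, hjb, rfl⟩ := (Nat.dvd_prime_pow hq).1 hj
  rcases hia.lt_or_eq with hia | rfl
  · exact .inl (mul_dvd_mul (pow_dvd_pow p (Nat.lt_succ_iff.1 hia)) hj)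
  rcases hjb.lt_or_eq with hjb | rfl
  · exact .inr (.inl (mul_dvd_mul hi (pow_dvd_pow q (Nat.lt_succ_iff.1 hjb))))
  · exact .inr (.inr rfl)

theorem exists_fiber_decomposition_of_cyclotomic_dvd {p q : ℕ} (hp : p.Prime) (hq : q.Prime)
    {a b : ℕ} {A : ℤ[X]} (hA : ∀ n, 0 ≤ A.coeff n)
    (h : cyclotomic (p ^ (a + 1) * q ^ (b + 1)) ℤ ∣ A) :
    ∃ F G : ℤ[X], (∀ n, 0 ≤ F.coeff n) ∧ (∀ n, 0 ≤ G.coeff n) ∧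
      X ^ (p ^ (a + 1) * q ^ (b + 1)) - 1 ∣
        A - ((∑ i ∈ Finset.range p, (X ^ (p ^ a * q ^ (b + 1))) ^ i) * F +
          (∑ i ∈ Finset.range q, (X ^ (p ^ (a + 1) * q ^ b)) ^ i) * G) := by
  have hpa : p ^ a * q ^ (b + 1) * p = p ^ (a + 1) * q ^ (b + 1) := by ring
  have hqb : p ^ (a + 1) * q ^ b * q = p ^ (a + 1) * q ^ (b + 1) := by ring
  have hc : 0 < p ^ a * q ^ (b + 1) := Nat.mul_pos (pow_pos hp.pos _) (pow_pos hq.pos _)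
  have hd : 0 < p ^ (a + 1) * q ^ b := Nat.mul_pos (pow_pos hp.pos _) (pow_pos hq.pos _)
  have hdvd := (X_pow_sub_one_dvd_mul_mul_cyclotomic ℤ (hpa ▸ dvd_mul_right _ p) hd
    (hqb ▸ lt_mul_of_one_lt_right hd hq.one_lt)
    fun e => dvd_or_dvd_or_eq_of_dvd_prime_pow_mul hp hq).trans
    (mul_dvd_mul_left _ (mul_dvd_mul_left _ h))
  simpa only [hpa] using exists_fiber_decomposition hc hp.pos hd hq.pos (hpa.trans hqb.symm) hA
    (by rwa [hpa])

section Splitting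

lemma eq_and_eq_of_mul_add_mul_eq {a b : ℕ} (hab : a.Coprime b) {u v u' v' : ℤ} (hu : 0 ≤ u)
    (hv : 0 ≤ v) (hu' : 0 ≤ u') (hv' : 0 ≤ v') (heq : a * u + b * v = a * u' + b * v')
    (hlt : a * u + b * v < a * b) : u = u' ∧ v = v' := by
  have hlt' := heq ▸ hlt
  obtain ⟨ha, hb⟩ : (0 : ℤ) < a ∧ (0 : ℤ) < b := by
    have hab_pos : (0 : ℤ) < a * b := lt_of_le_of_lt (by positivity) hlt
    exact_mod_cast CanonicallyOrderedAdd.mul_pos.1 (by exact_mod_cast hab_pos : 0 < a * b)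
  have hub : u < b := lt_of_mul_lt_mul_left (by nlinarith) ha.le
  have hub' : u' < b := lt_of_mul_lt_mul_left (by nlinarith) ha.le
  have hdvd : (b : ℤ) ∣ u - u' :=
    (Nat.isCoprime_iff_coprime.2 hab.symm).dvd_of_dvd_mul_left ⟨v' - v, by linear_combination heq⟩
  obtain rfl : u = u' := sub_eq_zero.1 (Int.eq_zero_of_abs_lt_dvd hdvd (by rw [abs_lt]; omega))
  exact ⟨rfl, mul_left_cancel₀ hb.ne' (add_left_cancel heq)⟩

variable {p : ℕ} (hp : p.Prime) {a b : ℕ} (hab : a.Coprime b) {F G : ℤ[X]}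
  (hF : ∀ n, 0 ≤ F.coeff n) (hG : ∀ n, 0 ≤ G.coeff n) {U : Finset ℕ} (hU : ∀ m ∈ U, 0 < m)
  (hdvd : ∀ m ∈ U, cyclotomic (p ^ m) ℤ ∣ a • F + b • G)
  (hlt : (a • F + b • G).eval 1 < p ^ U.card * (a * b))
include hp hab hF hG hU hdvd hlt

/-- Divisibility at the levels above `n + 1` makes the residue sums of `F` and `G` modulo
`p ^ (n + 1)` multiples of a power of `p`; after division by it they satisfy the size bound of
`eq_and_eq_of_mul_add_mul_eq`. -/
lemma cyclotomic_prime_pow_dvd_of_forall_gt {n : ℕ} (hn : n + 1 ∈ U)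
    (h : ∀ m ∈ U, n + 1 < m → cyclotomic (p ^ m) ℤ ∣ F ∧ cyclotomic (p ^ m) ℤ ∣ G) :
    cyclotomic (p ^ (n + 1)) ℤ ∣ F ∧ cyclotomic (p ^ (n + 1)) ℤ ∣ G := by
  let V := U.filter (n + 1 < ·)
  have hV (m : ℕ) (hm : m ∈ V) : n + 1 < m := (Finset.mem_filter.1 hm).2
  have hVU (m : ℕ) (hm : m ∈ V) : m ∈ U := (Finset.mem_filter.1 hm).1
  have hcard : (U.filter (· ≤ n + 1)).card + V.card = U.card := by
    simpa only [not_le] using U.card_filter_add_card_filter_not (· ≤ n + 1)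
  have hppos (k : ℕ) : (0 : ℤ) < p ^ k := pow_pos (by exact_mod_cast hp.pos) k
  obtain ⟨u, hu0, hu⟩ := exists_nonneg_residueSum_eq hp hF hV
    fun m hm => (h m (hVU m hm) (hV m hm)).1
  obtain ⟨v, hv0, hv⟩ := exists_nonneg_residueSum_eq hp hG hV
    fun m hm => (h m (hVU m hm) (hV m hm)).2
  have hB (x : ℤ) : residueSum (p ^ (n + 1)) (a • F + b • G) x =
      p ^ V.card * (a * u x + b * v x) := by
    rw [map_add, map_nsmul, map_nsmul, Pi.add_apply, Pi.smul_apply, Pi.smul_apply, hu, hv,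
      nsmul_eq_mul, nsmul_eq_mul]
    ring
  have hBcoeff (i : ℕ) : 0 ≤ (a • F + b • G).coeff i := by
    rw [coeff_add, coeff_smul, coeff_smul]
    exact add_nonneg (nsmul_nonneg (hF i) a) (nsmul_nonneg (hG i) b)
  have hbound (x : ℤ) : a * u x + b * v x < a * b := by
    refine lt_of_mul_lt_mul_left ?_ (hppos U.card).le
    rw [← hcard, pow_add, mul_assoc, ← hB, ← pow_add, hcard]
    exact (pow_card_mul_residueSum_le hp hU hBcoeff hdvd (n + 1) x).trans_lt hlt
  have huv (x : ℤ) : u (x + (p ^ n : ℕ)) = u x ∧ v (x + (p ^ n : ℕ)) = v x := by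
    have hper := (cyclotomic_prime_pow_dvd_iff_periodic hp).1 (hdvd _ hn) x
    rw [hB, hB] at hper
    exact eq_and_eq_of_mul_add_mul_eq hab (hu0 _) (hv0 _) (hu0 _) (hv0 _)
      (mul_left_cancel₀ (hppos _).ne' hper) (hbound _)
  rw [cyclotomic_prime_pow_dvd_iff_periodic hp, cyclotomic_prime_pow_dvd_iff_periodic hp]
  exact ⟨fun x => by rw [hu, hu, (huv x).1], fun x => by rw [hv, hv, (huv x).2]⟩

theorem cyclotomic_prime_pow_dvd_of_dvd_nsmul_add_nsmul {m : ℕ} (hm : m ∈ U) :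
    cyclotomic (p ^ m) ℤ ∣ F ∧ cyclotomic (p ^ m) ℤ ∣ G := by
  classical
  by_contra hbad
  obtain ⟨m, hm, hmax⟩ := (U.filter fun m =>
    ¬ (cyclotomic (p ^ m) ℤ ∣ F ∧ cyclotomic (p ^ m) ℤ ∣ G)).exists_max_image id
      ⟨m, Finset.mem_filter.2 ⟨hm, hbad⟩⟩
  obtain ⟨hmU, hm⟩ := Finset.mem_filter.1 hm
  obtain ⟨n, rfl⟩ := Nat.exists_eq_add_one.2 (hU m hmU)
  refine hm (cyclotomic_prime_pow_dvd_of_forall_gt hp hab hF hG hU hdvd hlt hmU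
    fun k hk hnk => ?_)
  by_contra hkbad
  exact (hmax k (Finset.mem_filter.2 ⟨hk, hkbad⟩)).not_gt hnk

end Splitting

lemma X_pow_sub_one_dvd_sub_nsmul_add_nsmul {R : Type*} [CommRing R] {s c d k l : ℕ} (hc : s ∣ c)
    (hd : s ∣ d) {A F G : R[X]}
    (h : X ^ s - 1 ∣ A - ((∑ i ∈ Finset.range k, (X ^ c) ^ i) * F +
      (∑ i ∈ Finset.range l, (X ^ d) ^ i) * G)) :
    X ^ s - 1 ∣ A - (k • F + l • G) := by
  have hF := (X_pow_sub_one_dvd_geom_sum_sub (R := R) hc k).mul_right F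
  have hG := (X_pow_sub_one_dvd_geom_sum_sub (R := R) hd l).mul_right G
  convert h.add (hF.add hG) using 1
  simp only [nsmul_eq_mul]
  ring

lemma eval_one_eq_of_X_pow_sub_one_dvd_sub {R : Type*} [CommRing R] {N : ℕ} {P Q : R[X]}
    (h : X ^ N - 1 ∣ P - Q) : P.eval 1 = Q.eval 1 := by
  obtain ⟨T, hT⟩ := h
  rw [← sub_eq_zero, ← eval_sub, hT]
  simp

section PrimePairFibers

variable {p q : ℕ} (hp : p.Prime) (hq : q.Prime) {a b : ℕ} {A F G : ℤ[X]}
  (hFG : X ^ (p ^ (a + 1) * q ^ (b + 1)) - 1 ∣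
    A - ((∑ i ∈ Finset.range p, (X ^ (p ^ a * q ^ (b + 1))) ^ i) * F +
      (∑ i ∈ Finset.range q, (X ^ (p ^ (a + 1) * q ^ b)) ^ i) * G))
include hFG

lemma eval_one_eq_of_fiber_decomposition : A.eval 1 = p * F.eval 1 + q * G.eval 1 := by
  simpa [eval_finsetSum] using eval_one_eq_of_X_pow_sub_one_dvd_sub hFG

include hp hq

lemma cyclotomic_dvd_left_of_eval_one_lt (hpq : p ≠ q) (hF : ∀ n, 0 ≤ F.coeff n)
    (hG : ∀ n, 0 ≤ G.coeff n) {U : Finset ℕ} (hU : ∀ m ∈ U, 0 < m) (hUa : ∀ m ∈ U, m ≤ a)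
    (hA : ∀ m ∈ U, cyclotomic (p ^ m) ℤ ∣ A) (hlt : A.eval 1 < p ^ U.card * (p * q)) :
    ∀ m ∈ U, cyclotomic (p ^ m) ℤ ∣ F := by
  have hB : ∀ m ∈ U, cyclotomic (p ^ m) ℤ ∣ p • F + q • G := fun m hm => by
    have hc : p ^ m ∣ p ^ a * q ^ (b + 1) := (pow_dvd_pow p (hUa m hm)).mul_right _
    have hd : p ^ m ∣ p ^ (a + 1) * q ^ b :=
      (pow_dvd_pow p ((hUa m hm).trans a.le_succ)).mul_right _
    have hN : p ^ m ∣ p ^ (a + 1) * q ^ (b + 1) :=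
      (pow_dvd_pow p ((hUa m hm).trans a.le_succ)).mul_right _
    have hsub := X_pow_sub_one_dvd_sub_nsmul_add_nsmul hc hd
      ((X_pow_sub_one_dvd_X_pow_sub_one hN).trans hFG)
    exact (dvd_iff_dvd_of_dvd_sub ((cyclotomic.dvd_X_pow_sub_one _ ℤ).trans hsub)).1 (hA m hm)
  have hltB : (p • F + q • G).eval 1 < p ^ U.card * (p * q) := by
    simpa [eval_one_eq_of_fiber_decomposition hFG] using hlt
  exact fun m hm => (cyclotomic_prime_pow_dvd_of_dvd_nsmul_add_nsmul hp
    ((Nat.coprime_primes hp hq).2 hpq) hF hG hU hB hltB hm).1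

lemma cyclotomic_dvd_of_left_eq_zero (hpq : p ≠ q) (hF : F = 0) :
    cyclotomic (q ^ (b + 1)) ℤ ∣ A := by
  have hN : q ^ (b + 1) ∣ p ^ (a + 1) * q ^ (b + 1) := dvd_mul_left _ _
  have hd : ¬ q ^ (b + 1) ∣ p ^ (a + 1) * q ^ b := fun h =>
    (Nat.pow_dvd_pow_iff_le_right hq.one_lt).not.2 b.lt_succ_self.not_ge <|
      (((Nat.coprime_primes hq hp).2 hpq.symm).pow _ _).dvd_of_dvd_mul_left h
  have hdq : p ^ (a + 1) * q ^ b * q = p ^ (a + 1) * q ^ (b + 1) := by ring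
  have hdq0 : p ^ (a + 1) * q ^ b * q ≠ 0 := by simp [hp.ne_zero, hq.ne_zero]
  have hgeom := (cyclotomic_dvd_geom_sum hdq0 (hdq ▸ hN) hd).mul_right G
  rw [hF, mul_zero, zero_add] at hFG
  exact (dvd_iff_dvd_of_dvd_sub ((cyclotomic.dvd_X_pow_sub_one _ ℤ).trans
    ((X_pow_sub_one_dvd_X_pow_sub_one hN).trans hFG))).2 hgeom

lemma pow_card_mul_dvd_eval_one_left (hpq : p ≠ q) (hF : ∀ n, 0 ≤ F.coeff n)
    (hG : ∀ n, 0 ≤ G.coeff n) {U : Finset ℕ} (hU : ∀ m ∈ U, 0 < m) (hUa : ∀ m ∈ U, m ≤ a)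
    (hA : ∀ m ∈ U, cyclotomic (p ^ m) ℤ ∣ A) (hlt : A.eval 1 < p ^ U.card * (p * q))
    (hqA : (q : ℤ) ∣ A.eval 1) : (p : ℤ) ^ U.card * q ∣ F.eval 1 := by
  have hcop : IsCoprime (p : ℤ) q :=
    Nat.isCoprime_iff_coprime.2 ((Nat.coprime_primes hp hq).2 hpq)
  have hpF := pow_card_dvd_eval_one hp hU <|
    cyclotomic_dvd_left_of_eval_one_lt hp hq hFG hpq hF hG hU hUa hA hlt
  rw [eval_one_eq_of_fiber_decomposition hFG, dvd_add_left (dvd_mul_right _ _)] at hqA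
  exact hcop.pow_left.mul_dvd hpF (hcop.symm.dvd_of_dvd_mul_left hqA)

end PrimePairFibers

theorem mass_ge_three_divisors'_general {p q : ℕ} (hp : p.Prime) (hq : q.Prime) (hpq : p ≠ q)
    {A : ℤ[X]} (hA : ∀ n, 0 ≤ A.coeff n) (hA0 : A ≠ 0) {U : Finset ℕ} {α β γ : ℕ}
    (hU : ∀ m ∈ U, 0 < m) (hUα : ∀ m ∈ U, m < α) (hα : 0 < α) (hβ : 0 < β) (hγ : 0 < γ)
    (hγβ : γ ≠ β) (hAp : ∀ m ∈ U, cyclotomic (p ^ m) ℤ ∣ A)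
    (hApq : cyclotomic (p ^ α * q ^ β) ℤ ∣ A) (hAq : cyclotomic (q ^ γ) ℤ ∣ A) :
    (p : ℤ) ^ U.card * q * min (p : ℤ) q ≤ A.eval 1 := by
  obtain ⟨a, rfl⟩ := Nat.exists_eq_add_one.2 hα
  obtain ⟨b, rfl⟩ := Nat.exists_eq_add_one.2 hβ
  obtain ⟨F, G, hF, hG, hFG⟩ := exists_fiber_decomposition_of_cyclotomic_dvd hp hq hA hApq
  by_contra! hlt
  rcases (eval_one_nonneg hF).eq_or_lt' with hF0 | hFpos
  · have hAq' : ∀ m ∈ ({γ, b + 1} : Finset ℕ), cyclotomic (q ^ m) ℤ ∣ A := by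
      simpa [hAq] using cyclotomic_dvd_of_left_eq_zero hp hq hFG hpq
        (eq_zero_of_eval_one_eq_zero hF hF0)
    have hdvd := pow_card_mul_pow_card_dvd_eval_one hp hq hpq hU (by simp [hγ]) hAp hAq'
    have hA1 : 0 < A.eval 1 := (eval_one_nonneg hA).lt_of_ne'
      (hA0 ∘ eq_zero_of_eval_one_eq_zero hA)
    rw [Finset.card_pair hγβ, sq, ← mul_assoc] at hdvd
    refine hlt.not_ge (le_trans ?_ (Int.le_of_dvd hA1 hdvd))
    gcongr
    exact min_le_right _ _
  · have hqA : (q : ℤ) ∣ A.eval 1 := by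
      simpa using pow_card_dvd_eval_one hq (V := {γ}) (by simpa) (by simpa)
    have hlt_pq : A.eval 1 < p ^ U.card * (p * q) := hlt.trans_le <| by
      rw [mul_comm (p : ℤ) q, ← mul_assoc]
      gcongr
      exact min_le_left _ _
    have hdvd := pow_card_mul_dvd_eval_one_left hp hq hFG hpq hF hG hU
      (fun m hm => Nat.lt_succ_iff.1 (hUα m hm)) hAp hlt_pq hqA
    have hG1 := eval_one_nonneg hG
    refine hlt_pq.not_ge ?_
    calc (p : ℤ) ^ U.card * (p * q) = p * (p ^ U.card * q) := by ring
      _ ≤ p * F.eval 1 := by gcongr; exact Int.le_of_dvd hFpos hdvd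
      _ ≤ p * F.eval 1 + q * G.eval 1 := le_add_of_nonneg_right (by positivity)
      _ = A.eval 1 := (eval_one_eq_of_fiber_decomposition hFG).symm

section MaskPolynomial

variable (M : ℕ) (w : ZMod M → ℕ)

lemma coeff_wmaskPoly_nonneg (n : ℕ) : 0 ≤ (wmaskPoly M w).coeff n := by
  simp only [wmaskPoly, finsetSum_coeff, coeff_C_mul, coeff_X_pow]
  positivity

lemma eval_one_wmaskPoly : (wmaskPoly M w).eval 1 = wmass M w := by
  simp [wmaskPoly, wmass, eval_finsetSum]

end MaskPolynomial

/-- Proposition 7.5: if `Φ_{p^{m_1}} ⋯ Φ_{p^{m_r}} Φ_{p^α q^β} Φ_{q^γ} ∣ A(X)` with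
`1 ≤ m_1 < ⋯ < m_r < α ≤ n_1` and `1 ≤ γ < β ≤ n_2`, then
`|A| ≥ p^r · q · min(p,q)`. -/
theorem mass_ge_three_divisors' (p q : ℕ) (hp : p.Prime) (hq : q.Prime) (hpq : p ≠ q)
    (n₁ n₂ : ℕ) (hn₁ : 1 ≤ n₁) (hn₂ : 1 ≤ n₂)
    (M : ℕ) (hM : M = p ^ n₁ * q ^ n₂)
    (w : ZMod M → ℕ) (hw : 0 < wmass M w)
    (r : ℕ) (hr : 1 ≤ r) (m : Fin r → ℕ) (hmono : StrictMono m)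
    (α β γ : ℕ) (hm1 : ∀ i, 1 ≤ m i) (hmα : ∀ i, m i < α) (hαn : α ≤ n₁)
    (hγ1 : 1 ≤ γ) (hγβ : γ < β) (hβn : β ≤ n₂)
    (hdvd : ((∏ i, cyclotomic (p ^ m i) ℤ) * cyclotomic (p ^ α * q ^ β) ℤ *
        cyclotomic (q ^ γ) ℤ) ∣ wmaskPoly M w) :
    p ^ r * q * min p q ≤ wmass M w := by
  have hprod := dvd_of_mul_right_dvd hdvd
  have hAp : ∀ k ∈ Finset.univ.map ⟨m, hmono.injective⟩,
      cyclotomic (p ^ k) ℤ ∣ wmaskPoly M w := by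
    simpa using fun i => (Finset.dvd_prod_of_mem (fun i => cyclotomic (p ^ m i) ℤ)
      (Finset.mem_univ i)).trans (dvd_of_mul_right_dvd hprod)
  have hA0 : wmaskPoly M w ≠ 0 := fun h => by
    have := eval_one_wmaskPoly M w
    rw [h, eval_zero] at this
    omega
  have hmass := mass_ge_three_divisors'_general hp hq hpq (coeff_wmaskPoly_nonneg M w) hA0
    (by simpa using fun i => Nat.zero_lt_of_lt (hm1 i)) (by simpa using hmα)
    (Nat.zero_lt_of_lt (hmα ⟨0, hr⟩)) (hγ1.trans hγβ.le) hγ1 hγβ.ne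
    hAp (dvd_of_mul_left_dvd hprod) (dvd_of_mul_left_dvd hdvd)
  rw [Finset.card_map, Finset.card_univ, Fintype.card_fin, eval_one_wmaskPoly] at hmass
  exact_mod_cast hmass
end

section
/- Let M = 2^n · 3^m with n ≥ 9 and m ≥ 6. Then there exists a set A ⊆ ℤ_M with |A| = 2^3 · 3^3 = 216 such that the product Φ_{2^n}(X) Φ_{2^{n-1}}(X) Φ_{2^{n-2}}(X) Φ_{3^m}(X) Φ_{3^{m-1}}(X) Φ_{3^{m-2}}(X) Φ_6(X) divides A(X). -/
open Polynomial

/-- Mask polynomial of a finite subset of `ZMod M`: `A(X) = ∑_{a ∈ A} X^{a.val}`. -/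
noncomputable def zmaskPoly (M : ℕ) (A : Finset (ZMod M)) : Polynomial ℤ :=
  ∑ a ∈ A, X ^ a.val

/-!
Divisibility by `∏_{k < j ≤ k + r} Φ_{p ^ j}` is forced by periodicity: this product is the mask
polynomial of the subgroup of order `p ^ r` in `ℤ_{p ^ (k + r)}`, so it divides the mask polynomial
of every union of its cosets. By the Chinese remainder theorem a subset of `ℤ_M` with
`M = p ^ (k + r) * q ^ (l + s)` amounts to a matching between a multiset in each factor. If both
multisets are unions of cosets with `k, l ≥ 1`, then every coset has a single residue modulo `p`
(resp. `q`), and the matching can realise any distribution of residues modulo `p * q` that has the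
right marginals. It remains to find such a distribution divisible by `Φ_{p * q}`. For `p = 2`,
`q = 3` it is made of 23 copies of `{0, 2, 4}`, 31 copies of `{1, 3, 5}` and 27 copies of `{0, 3}`:
there are `96 = 8 * 12` even and `120 = 8 * 15` odd elements, and `108 = 27 * 4`, `54 = 27 * 2`,
`54 = 27 * 2` elements in the residue classes `0, 1, 2` modulo `3`.
-/

section Cyclotomic

lemma isRelPrime_cyclotomic {a b : ℕ} (ha : 0 < a) (hb : 0 < b) (hab : a ≠ b) :
    IsRelPrime (cyclotomic a ℤ) (cyclotomic b ℤ) := by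
  rw [(cyclotomic.irreducible ha).isRelPrime_iff_not_dvd]
  intro hdvd
  have hassoc := (cyclotomic.irreducible ha).associated_of_dvd (cyclotomic.irreducible hb) hdvd
  exact hab <| cyclotomic_injective <|
    eq_of_monic_of_associated (cyclotomic.monic a ℤ) (cyclotomic.monic b ℤ) hassoc

lemma prod_cyclotomic_prime_pow_mul_X_pow_sub_one (R : Type*) [CommRing R] (p : ℕ)
    [Fact p.Prime] (k r : ℕ) :
    (∏ j ∈ Finset.range r, cyclotomic (p ^ (k + j + 1)) R) * (X ^ p ^ k - 1) =
      X ^ p ^ (k + r) - 1 := by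
  induction r with
  | zero => simp
  | succ r ih =>
    rw [Finset.prod_range_succ_comm, mul_assoc, ih, cyclotomic_prime_pow_mul_X_pow_sub_one,
      add_assoc]

lemma prod_cyclotomic_prime_pow_eq_geom_sum (R : Type*) [CommRing R] (p : ℕ) [Fact p.Prime]
    (k r : ℕ) :
    ∏ j ∈ Finset.range r, cyclotomic (p ^ (k + j + 1)) R =
      ∑ i ∈ Finset.range (p ^ r), (X ^ p ^ k) ^ i := by
  have hpk : p ^ k ≠ 0 := (pow_pos (Fact.out : p.Prime).pos k).ne'
  have hreg : IsRightRegular (X ^ p ^ k - 1 : R[X]) := (monic_X_pow_sub_C 1 hpk).isRegular.right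
  apply hreg
  simp only [prod_cyclotomic_prime_pow_mul_X_pow_sub_one, geom_sum_mul]
  rw [← pow_mul, ← pow_add]

lemma prod_cyclotomic_prime_pow_dvd_X_pow_sub_one (R : Type*) [CommRing R] (p : ℕ)
    [Fact p.Prime] (k r : ℕ) :
    ∏ j ∈ Finset.range r, cyclotomic (p ^ (k + j + 1)) R ∣ X ^ p ^ (k + r) - 1 :=
  ⟨_, (prod_cyclotomic_prime_pow_mul_X_pow_sub_one R p k r).symm⟩

lemma prod_cyclotomic_prime_pow_mul_dvd {p q : ℕ} [Fact p.Prime] [Fact q.Prime] (hpq : p ≠ q)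
    {k r l s : ℕ} {P : ℤ[X]}
    (hp : ∏ j ∈ Finset.range r, cyclotomic (p ^ (k + j + 1)) ℤ ∣ P)
    (hq : ∏ j ∈ Finset.range s, cyclotomic (q ^ (l + j + 1)) ℤ ∣ P)
    (hmul : cyclotomic (p * q) ℤ ∣ P) :
    (∏ j ∈ Finset.range r, cyclotomic (p ^ (k + j + 1)) ℤ) *
      (∏ j ∈ Finset.range s, cyclotomic (q ^ (l + j + 1)) ℤ) * cyclotomic (p * q) ℤ ∣ P := by
  have p_prime : p.Prime := Fact.out
  have q_prime : q.Prime := Fact.out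
  have pow_ne_pow (i j : ℕ) : p ^ (i + 1) ≠ q ^ (j + 1) := fun h ↦
    hpq <| (Nat.prime_dvd_prime_iff_eq p_prime q_prime).1 <|
      p_prime.dvd_of_dvd_pow (h ▸ dvd_pow_self p i.succ_ne_zero)
  have pow_ne_mul_left (i : ℕ) : p ^ i ≠ p * q := fun h ↦
    hpq.symm <| (Nat.prime_dvd_prime_iff_eq q_prime p_prime).1 <|
      q_prime.dvd_of_dvd_pow (h ▸ dvd_mul_left q p)
  have pow_ne_mul_right (j : ℕ) : q ^ j ≠ p * q := fun h ↦
    hpq <| (Nat.prime_dvd_prime_iff_eq p_prime q_prime).1 <|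
      p_prime.dvd_of_dvd_pow (h ▸ dvd_mul_right p q)
  refine IsRelPrime.mul_dvd (IsRelPrime.mul_left ?_ ?_) (IsRelPrime.mul_dvd ?_ hp hq) hmul
  · exact IsRelPrime.prod_left fun i _ ↦ isRelPrime_cyclotomic (pow_pos p_prime.pos _)
      (mul_pos p_prime.pos q_prime.pos) (pow_ne_mul_left _)
  · exact IsRelPrime.prod_left fun j _ ↦ isRelPrime_cyclotomic (pow_pos q_prime.pos _)
      (mul_pos p_prime.pos q_prime.pos) (pow_ne_mul_right _)
  · exact IsRelPrime.prod_left fun i _ ↦ IsRelPrime.prod_right fun j _ ↦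
      isRelPrime_cyclotomic (pow_pos p_prime.pos _) (pow_pos q_prime.pos _) (pow_ne_pow _ _)

end Cyclotomic

section MaskPolynomial

lemma pow_sub_one_dvd_pow_sub_pow {R : Type*} [CommRing R] (x : R) {N a b : ℕ}
    (h : a ≡ b [MOD N]) : x ^ N - 1 ∣ x ^ a - x ^ b := by
  wlog hba : b ≤ a generalizing a b
  · exact dvd_sub_comm.1 (this h.symm (le_of_not_ge hba))
  obtain ⟨c, hc⟩ : N ∣ a - b := (Nat.modEq_iff_dvd' hba).1 h.symm
  have hfactor : x ^ a - x ^ b = x ^ b * (x ^ (N * c) - 1) := by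
    rw [← hc, mul_sub, ← pow_add, Nat.add_sub_cancel' hba, mul_one]
  rw [hfactor]
  exact (pow_one_sub_dvd_pow_mul_sub_one x N c).mul_left _

lemma dvd_sum_X_pow_congr {R ι : Type*} [CommRing R] [Fintype ι] {D : R[X]} {N : ℕ}
    (hD : D ∣ X ^ N - 1) {a b : ι → ℕ} (hab : ∀ i, a i ≡ b i [MOD N]) :
    D ∣ ∑ i, X ^ a i ↔ D ∣ ∑ i, X ^ b i := by
  refine dvd_iff_dvd_of_dvd_sub ?_
  rw [← Finset.sum_sub_distrib]
  exact Finset.dvd_sum fun i _ ↦ hD.trans (pow_sub_one_dvd_pow_sub_pow X (hab i))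

lemma exists_zmaskPoly_eq_sum {M : ℕ} {ι : Type*} [Fintype ι] {e : ι → ℕ}
    (he : Function.Injective e) (hlt : ∀ i, e i < M) :
    ∃ A : Finset (ZMod M), A.card = Fintype.card ι ∧ zmaskPoly M A = ∑ i, X ^ e i := by
  have hval (i : ι) : (e i : ZMod M).val = e i := ZMod.val_cast_of_lt (hlt i)
  have hinj : Function.Injective fun i ↦ (e i : ZMod M) := fun i j hij ↦
    he <| by simpa only [hval] using congrArg ZMod.val hij
  refine ⟨Finset.univ.map ⟨_, hinj⟩, by simp, ?_⟩
  simp [zmaskPoly, hval]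

lemma exists_zmaskPoly_eq_sum_of_coprime {N₁ N₂ : ℕ} (hN : N₁.Coprime N₂) (hN₁ : N₁ ≠ 0)
    (hN₂ : N₂ ≠ 0) {ι : Type*} [Fintype ι] {x : ι → ℕ} (y : ι → ℕ)
    (hx : Function.Injective x) (hlt : ∀ i, x i < N₁) :
    ∃ (A : Finset (ZMod (N₁ * N₂))) (e : ι → ℕ), A.card = Fintype.card ι ∧
      zmaskPoly (N₁ * N₂) A = ∑ i, X ^ e i ∧
      (∀ i, e i ≡ x i [MOD N₁]) ∧ ∀ i, e i ≡ y i [MOD N₂] := by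
  let e (i : ι) : ℕ := Nat.chineseRemainder hN (x i) (y i)
  have hex (i : ι) : e i ≡ x i [MOD N₁] := (Nat.chineseRemainder hN (x i) (y i)).2.1
  have hey (i : ι) : e i ≡ y i [MOD N₂] := (Nat.chineseRemainder hN (x i) (y i)).2.2
  have he : Function.Injective e := fun i j hij ↦ hx <|
    Nat.ModEq.eq_of_lt_of_lt ((hex i).symm.trans (hij ▸ hex j)) (hlt i) (hlt j)
  obtain ⟨A, hcard, hA⟩ := exists_zmaskPoly_eq_sum he fun i ↦
    Nat.chineseRemainder_lt_mul hN (x i) (y i) hN₁ hN₂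
  exact ⟨A, e, hcard, hA, hex, hey⟩

end MaskPolynomial

section Matching

/-- The points of a finite multiset on `P`, given by its multiplicity function `v`. -/
abbrev MultisetPoint {P : Type*} (v : P → ℕ) : Type _ := Σ c, Fin (v c)

lemma card_multisetPoint_fiber {P I : Type*} [Fintype P] [DecidableEq I] (v : P → ℕ) (π : P → I)
    (i : I) :
    Fintype.card {t : MultisetPoint v // π t.1 = i} = ∑ c with π c = i, v c := by
  have hfilter : ({t : MultisetPoint v | π t.1 = i} : Finset _) =
      Finset.sigma {c | π c = i} fun _ ↦ Finset.univ := by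
    ext; simp
  rw [Fintype.card_subtype, hfilter, Finset.card_sigma]
  simp

lemma exists_equiv_of_card_fiber_eq {α β I : Type*} [Fintype α] [Fintype β] [DecidableEq I]
    (f : α → I) (g : β → I)
    (h : ∀ i, Fintype.card {a // f a = i} = Fintype.card {b // g b = i}) :
    ∃ u : α ≃ β, ∀ a, g (u a) = f a :=
  ⟨Equiv.ofFiberEquiv fun i ↦ Fintype.equivOfCardEq (h i), Equiv.ofFiberEquiv_map _⟩

end Matching

section CosetFamily

lemma eq_and_eq_of_add_mul_eq_of_lt {N a b c d : ℕ} (ha : a < N) (hb : b < N)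
    (h : a + N * c = b + N * d) : a = b ∧ c = d := by
  have hab : a = b := by
    simpa [Nat.mod_eq_of_lt ha, Nat.mod_eq_of_lt hb] using congrArg (· % N) h
  subst hab
  exact ⟨rfl, Nat.eq_of_mul_eq_mul_left (Nat.zero_lt_of_lt ha) (Nat.add_left_cancel h)⟩

/-- Indices for a family of cosets of the subgroup of order `p ^ r` in a cyclic `p`-group,
`a i` of them in the residue class `i` modulo `p`, together with the elements of each coset. -/
abbrev CosetIndex (p r : ℕ) (a : ZMod p → ℕ) : Type := MultisetPoint a × Fin (p ^ r)

/-- The representative in `ℕ` of an element of a family of cosets in `ℤ_{p ^ (k + 1 + r)}`. The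
coset indexed by `⟨i, c⟩` is that of `i + p * c` with respect to the subgroup generated by
`p ^ (k + 1)`. -/
def cosetPoint {p r : ℕ} {a : ZMod p → ℕ} (k : ℕ) (x : CosetIndex p r a) : ℕ :=
  x.1.1.val + p * x.1.2 + p ^ (k + 1) * x.2

variable {p r : ℕ} {a : ZMod p → ℕ} (k : ℕ)

lemma natCast_cosetPoint [NeZero p] (x : CosetIndex p r a) :
    (cosetPoint k x : ZMod p) = x.1.1 := by
  simp [cosetPoint]

lemma card_cosetIndex_fiber [NeZero p] (i : ZMod p) :
    Fintype.card {x : CosetIndex p r a // x.1.1 = i} = p ^ r * a i := by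
  have hfilter : ({x : CosetIndex p r a | x.1.1 = i} : Finset _) =
      ({c : MultisetPoint a | c.1 = i} : Finset _) ×ˢ Finset.univ := by
    ext; simp
  rw [Fintype.card_subtype, hfilter, Finset.card_product, ← Fintype.card_subtype,
    card_multisetPoint_fiber a fun j ↦ j, mul_comm]
  simp [Finset.filter_eq']

variable {k}

lemma val_add_mul_lt_pow_succ [NeZero p] (ha : ∀ i, a i ≤ p ^ k) (c : MultisetPoint a) :
    c.1.val + p * c.2 < p ^ (k + 1) := by
  have hres : c.1.val < p := ZMod.val_lt c.1
  have hquot : (c.2 : ℕ) + 1 ≤ p ^ k := c.2.2.trans_le (ha c.1)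
  calc c.1.val + p * c.2 < p * (c.2 + 1) := by rw [mul_add]; omega
    _ ≤ p * p ^ k := Nat.mul_le_mul_left p hquot
    _ = p ^ (k + 1) := (pow_succ' p k).symm

lemma cosetPoint_lt [NeZero p] (ha : ∀ i, a i ≤ p ^ k) (x : CosetIndex p r a) :
    cosetPoint k x < p ^ (k + 1 + r) := by
  calc cosetPoint k x < p ^ (k + 1) * (x.2 + 1) := by
        have hrep := val_add_mul_lt_pow_succ ha x.1
        rw [cosetPoint, mul_add]; omega
    _ ≤ p ^ (k + 1) * p ^ r := Nat.mul_le_mul_left _ x.2.2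
    _ = p ^ (k + 1 + r) := (pow_add p (k + 1) r).symm

lemma cosetPoint_injective [NeZero p] (ha : ∀ i, a i ≤ p ^ k) :
    Function.Injective (cosetPoint k : CosetIndex p r a → ℕ) := by
  rintro ⟨⟨i, c⟩, t⟩ ⟨⟨j, d⟩, u⟩ h
  obtain ⟨hrep, htu⟩ := eq_and_eq_of_add_mul_eq_of_lt
    (val_add_mul_lt_pow_succ ha _) (val_add_mul_lt_pow_succ ha _) h
  obtain ⟨hij, hcd⟩ := eq_and_eq_of_add_mul_eq_of_lt (ZMod.val_lt _) (ZMod.val_lt _) hrep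
  obtain rfl : i = j := ZMod.val_injective p hij
  obtain rfl : c = d := Fin.ext hcd
  obtain rfl : t = u := Fin.ext htu
  rfl

variable (p r a k) in
lemma prod_cyclotomic_prime_pow_dvd_sum_cosetPoint [Fact p.Prime] (R : Type*) [CommRing R] :
    ∏ j ∈ Finset.range r, cyclotomic (p ^ (k + 1 + j + 1)) R ∣
      ∑ x : CosetIndex p r a, X ^ cosetPoint k x := by
  have hfactor : ∑ x : CosetIndex p r a, (X : R[X]) ^ cosetPoint k x =
      (∑ c : MultisetPoint a, X ^ (c.1.val + p * c.2)) *
        ∑ i ∈ Finset.range (p ^ r), (X ^ p ^ (k + 1)) ^ i := by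
    simp only [cosetPoint, Fintype.sum_prod_type, Finset.sum_range, Finset.sum_mul_sum, pow_add,
      pow_mul]
  rw [hfactor, prod_cyclotomic_prime_pow_eq_geom_sum]
  exact dvd_mul_left _ _

end CosetFamily

lemma exists_equiv_cosetPoint_modEq {P : Type*} [Fintype P] (p k r : ℕ) [NeZero p]
    {v : P → ℕ} {a : ZMod p → ℕ} (ρ : P → ℕ)
    (hv : ∀ i, ∑ c with (ρ c : ZMod p) = i, v c = p ^ r * a i) :
    ∃ u : MultisetPoint v ≃ CosetIndex p r a,
      ∀ t, cosetPoint k (u t) ≡ ρ t.1 [MOD p] := by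
  obtain ⟨u, hu⟩ := exists_equiv_of_card_fiber_eq
    (fun t : MultisetPoint v ↦ (ρ t.1 : ZMod p)) (fun x : CosetIndex p r a ↦ x.1.1) fun i ↦ by
      rw [card_multisetPoint_fiber v fun c ↦ (ρ c : ZMod p), hv, card_cosetIndex_fiber]
  exact ⟨u, fun t ↦ (ZMod.natCast_eq_natCast_iff _ _ _).1 <|
    (natCast_cosetPoint k (u t)).trans (hu t)⟩

theorem exists_prod_cyclotomic_dvd_zmaskPoly {p q : ℕ} [Fact p.Prime] [Fact q.Prime]
    (hpq : p ≠ q) (k l r s : ℕ) (v : ZMod (p * q) → ℕ) (a : ZMod p → ℕ) (b : ZMod q → ℕ)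
    (hva : ∀ i, ∑ c with (c.val : ZMod p) = i, v c = p ^ r * a i)
    (hvb : ∀ j, ∑ c with (c.val : ZMod q) = j, v c = q ^ s * b j)
    (ha : ∀ i, a i ≤ p ^ k)
    (hv : cyclotomic (p * q) ℤ ∣ ∑ c, (v c : ℤ[X]) * X ^ c.val) :
    ∃ A : Finset (ZMod (p ^ (k + 1 + r) * q ^ (l + 1 + s))), A.card = ∑ c, v c ∧
      (∏ j ∈ Finset.range r, cyclotomic (p ^ (k + 1 + j + 1)) ℤ) *
        (∏ j ∈ Finset.range s, cyclotomic (q ^ (l + 1 + j + 1)) ℤ) * cyclotomic (p * q) ℤ ∣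
      zmaskPoly (p ^ (k + 1 + r) * q ^ (l + 1 + s)) A := by
  have hcop : p.Coprime q := (Nat.coprime_primes Fact.out Fact.out).2 hpq
  obtain ⟨u, hu⟩ := exists_equiv_cosetPoint_modEq p k r _ hva
  obtain ⟨w, hw⟩ := exists_equiv_cosetPoint_modEq q l s _ hvb
  obtain ⟨A, e, hcard, hA, hex, hey⟩ := exists_zmaskPoly_eq_sum_of_coprime (hcop.pow _ _)
    (NeZero.ne (p ^ (k + 1 + r))) (NeZero.ne (q ^ (l + 1 + s)))
    (x := fun t ↦ cosetPoint k (u t)) (fun t ↦ cosetPoint l (w t))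
    ((cosetPoint_injective ha).comp u.injective) fun t ↦ cosetPoint_lt ha (u t)
  refine ⟨A, by simp [hcard], prod_cyclotomic_prime_pow_mul_dvd hpq ?_ ?_ ?_⟩ <;> rw [hA]
  · rw [dvd_sum_X_pow_congr (prod_cyclotomic_prime_pow_dvd_X_pow_sub_one ℤ p _ _) hex,
      Equiv.sum_comp u fun x ↦ X ^ cosetPoint k x]
    exact prod_cyclotomic_prime_pow_dvd_sum_cosetPoint p r a k ℤ
  · rw [dvd_sum_X_pow_congr (prod_cyclotomic_prime_pow_dvd_X_pow_sub_one ℤ q _ _) hey,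
      Equiv.sum_comp w fun x ↦ X ^ cosetPoint l x]
    exact prod_cyclotomic_prime_pow_dvd_sum_cosetPoint q s b l ℤ
  · have he (t : MultisetPoint v) : e t ≡ t.1.val [MOD p * q] := by
      refine (Nat.modEq_and_modEq_iff_modEq_mul hcop).1 ⟨?_, ?_⟩
      · exact ((hex t).of_dvd (dvd_pow_self p (by omega))).trans (hu t)
      · exact ((hey t).of_dvd (dvd_pow_self q (by omega))).trans (hw t)
    rw [dvd_sum_X_pow_congr (cyclotomic.dvd_X_pow_sub_one _ _) he, Fintype.sum_sigma]
    simpa using hv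

theorem exists_small_set_two_three_general (n m : ℕ) (hn : 8 ≤ n) (hm : 4 ≤ m) :
    ∃ A : Finset (ZMod (2 ^ n * 3 ^ m)),
      A.card = 216 ∧
      (cyclotomic (2 ^ n) ℤ * cyclotomic (2 ^ (n - 1)) ℤ * cyclotomic (2 ^ (n - 2)) ℤ *
        cyclotomic (3 ^ m) ℤ * cyclotomic (3 ^ (m - 1)) ℤ * cyclotomic (3 ^ (m - 2)) ℤ *
        cyclotomic 6 ℤ) ∣ zmaskPoly (2 ^ n * 3 ^ m) A := by
  obtain ⟨k, rfl⟩ : ∃ k, n = k + 1 + 3 := ⟨n - 4, by omega⟩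
  obtain ⟨l, rfl⟩ : ∃ l, m = l + 1 + 3 := ⟨m - 4, by omega⟩
  let v : ZMod (2 * 3) → ℕ := (![50, 31, 23, 58, 23, 31] : Fin 6 → ℕ)
  let a : ZMod 2 → ℕ := (![12, 15] : Fin 2 → ℕ)
  let b : ZMod 3 → ℕ := (![4, 2, 2] : Fin 3 → ℕ)
  have ha (i : ZMod 2) : a i ≤ 2 ^ k :=
    calc a i ≤ 2 ^ 4 := by fin_cases i <;> decide
      _ ≤ 2 ^ k := Nat.pow_le_pow_right two_pos (by omega)
  have hv : cyclotomic (2 * 3) ℤ ∣ ∑ c, (v c : ℤ[X]) * X ^ c.val := by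
    have hsum : ∑ c, (v c : ℤ[X]) * X ^ c.val =
        50 + 31 * X + 23 * X ^ 2 + 58 * X ^ 3 + 23 * X ^ 4 + 31 * X ^ 5 :=
      (Fin.sum_univ_six fun c : Fin 6 ↦ (v c : ℤ[X]) * X ^ (c : ℕ)).trans (by simp [v])
    refine ⟨(23 + 31 * X) * (X ^ 2 + X + 1) + 27 * (X + 1), hsum.trans ?_⟩
    simp only [Nat.reduceMul, cyclotomic_six]
    ring
  obtain ⟨A, hcard, hA⟩ := exists_prod_cyclotomic_dvd_zmaskPoly (p := 2) (q := 3) (by decide)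
    k l 3 3 v a b (by decide) (by decide) ha hv
  refine ⟨A, hcard, ?_⟩
  convert hA using 1
  simp only [Finset.prod_range_succ, Finset.prod_range_zero, one_mul, Nat.add_assoc,
    Nat.reduceAdd, Nat.reduceMul, Nat.reduceSubDiff]
  ring

/-- Proposition 7.11: for `M = 2^n 3^m` with `n ≥ 9`, `m ≥ 6`, there is a set
`A ⊆ ℤ_M` of size `2^3 · 3^3 = 216` such that
`Φ_{2^n} Φ_{2^{n-1}} Φ_{2^{n-2}} Φ_{3^m} Φ_{3^{m-1}} Φ_{3^{m-2}} Φ_6 ∣ A(X)`. -/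
theorem exists_small_set_two_three (n m : ℕ) (hn : 9 ≤ n) (hm : 6 ≤ m) :
    ∃ A : Finset (ZMod (2 ^ n * 3 ^ m)),
      A.card = 216 ∧
      (cyclotomic (2 ^ n) ℤ * cyclotomic (2 ^ (n - 1)) ℤ * cyclotomic (2 ^ (n - 2)) ℤ *
        cyclotomic (3 ^ m) ℤ * cyclotomic (3 ^ (m - 1)) ℤ * cyclotomic (3 ^ (m - 2)) ℤ *
        cyclotomic 6 ℤ) ∣ zmaskPoly (2 ^ n * 3 ^ m) A :=
  exists_small_set_two_three_general n m (by omega) (by omega)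
end
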